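/- There exists a class of languages learnable by a dual strongly monotone behaviorally correct full-information learner from informants but not by any strongly monotone one: [Inf G SMon^d Bc] \ [Inf G SMon Bc] ≠ ∅; in fact the class {ℕ} ∪ {{0,1,…,n} | n ∈ ℕ} witnesses this separation. -/

import Mathlib

open Filter Classical

namespace InfBc

/-! ### Basic notions: r.e. sets, informants, learners -/

/-- The `e`-th recursively enumerable set (via an acceptable numbering of
partial computable functions, `W e = dom φ_e`). -/
def W (e : ℕ) : Set ℕ := {x | ((Denumerable.ofNat Nat.Partrec.Code e).eval x).Dom}

/-- A language is recursively enumerable. -/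
def RE (L : Set ℕ) : Prop := ∃ e, W e = L

abbrev Datum := ℕ × Bool
abbrev Seq := List Datum
abbrev Informant := ℕ → Datum
abbrev HypSeq := ℕ → Part ℕ
/-- Learners are partial functions; all input types are coded into `ℕ`. -/
abbrev Learner := ℕ →. ℕ
abbrev Restriction := HypSeq → Informant → Prop

/-- Positive information of an infinite sequence. -/
def posI (I : Informant) : Set ℕ := {x | ∃ n, I n = (x, true)}
/-- Negative information of an infinite sequence. -/
def negI (I : Informant) : Set ℕ := {x | ∃ n, I n = (x, false)}

/-- `I` is an informant for the language `L`. -/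
def IsInformant (I : Informant) (L : Set ℕ) : Prop := posI I = L ∧ negI I = Lᶜ

/-- `I` is an informant (for some language), i.e. `I ∈ Inf`. -/
def IsInf (I : Informant) : Prop := IsInformant I (posI I)

/-- `I` is a canonical informant. -/
def Canonical (I : Informant) : Prop := ∀ x, I x = (x, true) ∨ I x = (x, false)

/-- `I[n]`, the length-`n` initial segment of `I`. -/
def segment (I : Informant) (n : ℕ) : Seq := (List.range n).map I

/-- Positive information of a finite sequence. -/
def posS (σ : Seq) : Set ℕ := {x | (x, true) ∈ σ}
/-- Negative information of a finite sequence. -/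
def negS (σ : Seq) : Set ℕ := {x | (x, false) ∈ σ}
/-- The content of a finite sequence, as a set. -/
def contentS (σ : Seq) : Set Datum := {a | a ∈ σ}

/-! ### Interaction operators -/

abbrev InteractionOperator := Learner → Informant → HypSeq

/-- Full-information (Gold-style) interaction: `G(h,I)(i) = h(I[i])`. -/
def Gop : InteractionOperator := fun h I i => h (Encodable.encode (segment I i))

/-- Set-driven interaction: `Sd(h,I)(i) = h(content(I[i]))`. -/
def Sdop : InteractionOperator := fun h I i => h (Encodable.encode (segment I i).toFinset)

/-- The iterated evaluation of an iterative learner on a finite sequence: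
start with the initial hypothesis `h(none)` and feed the data one by one. -/
def iterExtend (h : Learner) (σ : Seq) : Part ℕ :=
  σ.foldl (fun pe a => pe.bind fun e => h (Encodable.encode (some (e, a))))
    (h (Encodable.encode (none : Option (ℕ × Datum))))

/-- Iterative interaction: `It(h,I)(i)` is obtained by feeding `I[i]` one datum
at a time, each time updating the previous hypothesis. -/
def Itop : InteractionOperator := fun h I i => iterExtend h (segment I i)

/-- An iterative learner is confluent if the order and multiplicity in which
the content is presented does not matter. -/
def ConfluentLearner (h : Learner) : Prop :=
  ∀ σ τ : Seq, contentS σ = contentS τ → iterExtend h σ = iterExtend h τ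

/-- Confluently iterative interaction. -/
noncomputable def CflItop : InteractionOperator := fun h I i =>
  if ConfluentLearner h then iterExtend h (segment I i) else Part.none

/-- `β ≼ β'`: every (partial computable) `β`-learner can be translated into a
`β'`-learner with the same hypothesis sequence on every informant. -/
def OpLe (β β' : InteractionOperator) : Prop :=
  ∀ h : Learner, Partrec h → ∃ h' : Learner, Partrec h' ∧
    ∀ I : Informant, IsInf I → ∀ n, β h I n = β' h' I n

/-! ### Learning restrictions -/

/-- The trivial restriction `T`. -/
def TT : Restriction := fun _ _ => True

/-- Explanatory identification. -/
def Ex : Restriction := fun p I =>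
  ∃ q, W q = posI I ∧ ∀ᶠ n in atTop, p n = Part.some q

/-- Behaviorally correct identification. -/
def Bc : Restriction := fun p I => ∀ᶠ n in atTop, ∃ e ∈ p n, W e = posI I

/-- Consistency of a hypothesis with a finite sequence of data. -/
def ConsH (e : ℕ) (σ : Seq) : Prop := posS σ ⊆ W e ∧ negS σ ∩ W e = ∅

/-- Consistency of a hypothesis sequence with an informant. -/
def Cons : Restriction := fun p I => ∀ n, ∃ e ∈ p n, ConsH e (segment I n)

/-- Strongly monotone. -/
def SMon : Restriction := fun p _ =>
  ∀ s t, s ≤ t → ∀ e ∈ p s, ∀ e' ∈ p t, W e ⊆ W e'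

/-- Dual strongly monotone. -/
def SMond : Restriction := fun p _ =>
  ∀ s t, s ≤ t → ∀ e ∈ p s, ∀ e' ∈ p t, W e' ⊆ W e

/-- Monotone. -/
def Mon : Restriction := fun p I =>
  ∀ s t, s ≤ t → ∀ e ∈ p s, ∀ e' ∈ p t, W e ∩ posI I ⊆ W e' ∩ posI I

/-- Dual monotone. -/
def Mond : Restriction := fun p I =>
  ∀ s t, s ≤ t → ∀ e ∈ p s, ∀ e' ∈ p t, (W e)ᶜ ∩ negI I ⊆ (W e')ᶜ ∩ negI I

/-- Weakly monotone. -/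
def WMon : Restriction := fun p I =>
  ∀ s t, s ≤ t → ∀ e ∈ p s, ConsH e (segment I t) → ∀ e' ∈ p t, W e ⊆ W e'

/-- Dual weakly monotone. -/
def WMond : Restriction := fun p I =>
  ∀ s t, s ≤ t → ∀ e ∈ p s, ConsH e (segment I t) → ∀ e' ∈ p t, W e' ⊆ W e

/-- Cautious. -/
def Caut : Restriction := fun p _ =>
  ∀ s t, s < t → ∀ e ∈ p s, ∀ e' ∈ p t, ¬ W e' ⊂ W e

/-- Target cautious. -/
def CautTar : Restriction := fun p I =>
  ∀ s, ∀ e ∈ p s, ¬ posI I ⊂ W e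

/-- Finitely cautious. -/
def CautFin : Restriction := fun p _ =>
  ∀ s t, s < t → ∀ e ∈ p s, ∀ e' ∈ p t, W e' ⊂ W e → (W e').Infinite

/-- Infinitely cautious. -/
def CautInf : Restriction := fun p _ =>
  ∀ s t, s < t → ∀ e ∈ p s, ∀ e' ∈ p t, W e' ⊂ W e → (W e').Finite

/-! ### Learnability -/

/-- The class of admissible learners: all partial computable learners. -/
def AllL : Learner → Prop := fun _ => True
/-- The class of admissible learners: total computable learners (`ℛ`). -/
def TotalL : Learner → Prop := fun h => ∀ x, (h x).Dom
/-- Admissible informants: all informants (`Inf`). -/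
def AllI : Informant → Prop := fun _ => True

/-- `h` learns `L` in the setting given by admissible informants `P`,
interaction operator `β` and local restriction `δ`. -/
def LearnsWith (P : Informant → Prop) (β : InteractionOperator) (δ : Restriction)
    (h : Learner) (L : Set ℕ) : Prop :=
  RE L ∧ ∀ I : Informant, P I → IsInformant I L → δ (β h I) I

/-- `[τ(α) C P β δ]`: the collection of all classes of languages learnable by
some learner in `C` that satisfies the global restriction `α` on all admissible
informants, under interaction operator `β` and local restriction `δ`. -/
def Learnable (α : Restriction) (C : Learner → Prop) (P : Informant → Prop)
    (β : InteractionOperator) (δ : Restriction) : Set (Set (Set ℕ)) :=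
  {𝓛 | ∃ h : Learner, Partrec h ∧ C h ∧
        (∀ I : Informant, IsInf I → P I → α (β h I) I) ∧
        ∀ L ∈ 𝓛, LearnsWith P β δ h L}

/-! ### Properties of restrictions -/

/-- A learning restriction is delayable if it is preserved under postponing
hypotheses along a non-decreasing unbounded function. -/
def Delayable (δ : Restriction) : Prop :=
  ∀ I I' : Informant, IsInf I → IsInf I' → Set.range I = Set.range I' →
    ∀ (p : HypSeq) (s : ℕ → ℕ), Monotone s → (∀ m, ∃ n, m ≤ s n) →
      δ p I → (∀ n, contentS (segment I (s n)) ⊆ contentS (segment I' n)) →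
      δ (fun n => p (s n)) I'

/-- A learning restriction is semantic if it is indifferent to replacing the
hypothesis sequence by a semantically equivalent one. -/
def Semantic (δ : Restriction) : Prop :=
  ∀ (p p' : HypSeq) (I : Informant), δ p I →
    (∀ i, (p i).Dom ↔ (p' i).Dom) →
    (∀ i, ∀ e ∈ p i, ∀ e' ∈ p' i, W e = W e') →
    δ p' I

/-!
If every language of the class is an initial segment of `ℕ`, conjecture everything below the
negative data seen so far. These conjectures shrink as data arrives, and they stabilise on the
target `L` as soon as the least element of `Lᶜ` has been presented (or at once if `L = ℕ`).

Conversely, every conjecture of a strongly monotone behaviorally correct learner is contained in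
the target. Such a learner, reading an informant for `ℕ`, conjectures `ℕ` after finitely many data;
these data are also consistent with some `{0, …, n}`, for which `ℕ` is then an overgeneralisation.
-/

/-- The informant for `L` that presents the numbers in increasing order. -/
noncomputable def canonicalInformant (L : Set ℕ) : Informant := fun x => (x, decide (x ∈ L))

theorem canonical_canonicalInformant (L : Set ℕ) : Canonical (canonicalInformant L) := by
  intro x
  by_cases hx : x ∈ L <;> simp [canonicalInformant, hx]

theorem isInformant_canonicalInformant (L : Set ℕ) : IsInformant (canonicalInformant L) L := by
  constructor <;> ext x <;> simp [canonicalInformant, posI, negI]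

theorem segment_canonicalInformant_congr {L L' : Set ℕ} {n : ℕ}
    (h : ∀ x < n, x ∈ L ↔ x ∈ L') :
    segment (canonicalInformant L) n = segment (canonicalInformant L') n :=
  List.map_congr_left fun x hx => by simp [canonicalInformant, h x (List.mem_range.1 hx)]

theorem mem_negS_segment {I : Informant} {n y : ℕ} :
    y ∈ negS (segment I n) ↔ ∃ k < n, I k = (y, false) := by
  simp [negS, segment]

theorem IsInformant.re_of_bc {I : Informant} {L : Set ℕ} {p : HypSeq}
    (hI : IsInformant I L) (hB : Bc p I) : RE L := by
  obtain ⟨_, e, _, he⟩ := hB.exists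
  exact ⟨e, he.trans hI.1⟩

theorem SMon.W_subset_posI {p : HypSeq} {I : Informant} (hS : SMon p I) (hB : Bc p I)
    {n e : ℕ} (he : e ∈ p n) : W e ⊆ posI I := by
  obtain ⟨m, ⟨e', he', hW⟩, hnm⟩ := (hB.and (eventually_ge_atTop n)).exists
  exact hW ▸ hS n m hnm e he e' he'

theorem notMem_learnable_smon_bc {α : Restriction} {C : Learner → Prop} {P : Informant → Prop}
    (hP : ∀ I, Canonical I → P I) {𝓛 : Set (Set ℕ)} {L : Set ℕ} (hL : L ∈ 𝓛)
    (hclose : ∀ n, ∃ L' ∈ 𝓛, (∀ x < n, x ∈ L ↔ x ∈ L') ∧ ¬ L ⊆ L') :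
    𝓛 ∉ Learnable α C P Gop (fun p I => SMon p I ∧ Bc p I) := by
  rintro ⟨h, _, _, _, hlearns⟩
  have smon_bc {K : Set ℕ} (hK : K ∈ 𝓛) :
      SMon (Gop h (canonicalInformant K)) (canonicalInformant K) ∧
        Bc (Gop h (canonicalInformant K)) (canonicalInformant K) :=
    (hlearns K hK).2 _ (hP _ (canonical_canonicalInformant K)) (isInformant_canonicalInformant K)
  obtain ⟨n, e, he, hW⟩ := (smon_bc hL).2.exists
  obtain ⟨L', hL', hagree, hnot⟩ := hclose n
  have he' : e ∈ Gop h (canonicalInformant L') n := by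
    unfold Gop at he ⊢
    rwa [← segment_canonicalInformant_congr hagree]
  apply hnot
  calc L = W e := (hW.trans (isInformant_canonicalInformant L).1).symm
    _ ⊆ posI (canonicalInformant L') := (smon_bc hL').1.W_subset_posI (smon_bc hL').2 he'
    _ = L' := (isInformant_canonicalInformant L').1

theorem exists_computable_W_eq {β : Type*} [Primcodable β] {c : β → Set ℕ}
    (hc : REPred fun a : β × ℕ => a.2 ∈ c a.1) :
    ∃ f : β → ℕ, Computable f ∧ ∀ b, W (f b) = c b := by
  have hpart : Partrec fun a : β × ℕ => (Part.assert (a.2 ∈ c a.1) fun _ => Part.some ()) := hc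
  obtain ⟨code, hcode⟩ := Nat.Partrec.Code.exists_code.1 hpart
  refine ⟨fun b => Encodable.encode (code.curry (Encodable.encode b)), ?_, fun b => ?_⟩
  · exact (Primrec.encode.comp
      (Nat.Partrec.Code.primrec₂_curry.comp (Primrec.const code) Primrec.encode)).to_comp
  · ext x
    simp [W, Nat.Partrec.Code.eval_curry, hcode, Part.assert]

theorem exists_partrec_Gop_eq_some {f : Seq → ℕ} (hf : Computable f) :
    ∃ h : Learner, Partrec h ∧ ∀ I n, Gop h I n = Part.some (f (segment I n)) := by
  refine ⟨fun k => (Part.ofOption (Encodable.decode k)).map f, ?_, fun I n => ?_⟩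
  · exact Computable.decode.ofOption.map (hf.comp Computable.snd).to₂
  · simp [Gop]

theorem mem_learnable_smond_bc {𝓛 : Set (Set ℕ)} {c : Seq → Set ℕ}
    (hc : REPred fun a : Seq × ℕ => a.2 ∈ c a.1)
    (hanti : ∀ L ∈ 𝓛, ∀ I, IsInformant I L → Antitone fun n => c (segment I n))
    (hlim : ∀ L ∈ 𝓛, ∀ I, IsInformant I L → ∀ᶠ n in atTop, c (segment I n) = L) :
    𝓛 ∈ Learnable TT AllL AllI Gop (fun p I => SMond p I ∧ Bc p I) := by
  obtain ⟨f, hf, hW⟩ := exists_computable_W_eq hc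
  obtain ⟨h, hh, hGop⟩ := exists_partrec_Gop_eq_some hf
  have hbc {L I} (hL : L ∈ 𝓛) (hI : IsInformant I L) : Bc (Gop h I) I := by
    filter_upwards [hlim L hL I hI] with n hn
    exact ⟨f (segment I n), by simp [hGop], by rw [hW, hn, hI.1]⟩
  have hsmond {L I} (hL : L ∈ 𝓛) (hI : IsInformant I L) : SMond (Gop h I) I := by
    intro s t hst e he e' he'
    rw [hGop, Part.mem_some_iff] at he he'
    subst he he'
    simpa only [hW] using hanti L hL I hI hst
  refine ⟨h, hh, trivial, fun _ _ _ => trivial, fun L hL => ⟨?_, fun I _ hI => ?_⟩⟩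
  · have hI := isInformant_canonicalInformant L
    exact hI.re_of_bc (hbc hL hI)
  · exact ⟨hsmond hL hI, hbc hL hI⟩

/-- The numbers below all negative data of `σ`: the largest initial segment of `ℕ` that avoids
`negS σ`. It is the conjecture of the dual strongly monotone learner. -/
def belowNeg (σ : Seq) : Set ℕ := {x | ∀ y ∈ negS σ, x < y}

theorem rePred_mem_belowNeg : REPred fun a : Seq × ℕ => a.2 ∈ belowNeg a.1 := by
  have hdatum : PrimrecRel fun (d : Datum) (x : ℕ) => d.2 = true ∨ x < d.1 :=
    PrimrecPred.or
      (Primrec.eq.comp (Primrec.snd.comp Primrec.fst) (Primrec.const true))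
      (Primrec.nat_lt.comp Primrec.snd (Primrec.fst.comp Primrec.fst))
  have hforall : PrimrecPred fun a : Seq × ℕ => ∀ d ∈ a.1, d.2 = true ∨ a.2 < d.1 :=
    hdatum.forall_mem_list
  have hcomp : ComputablePred fun a : Seq × ℕ => ∀ d ∈ a.1, d.2 = true ∨ a.2 < d.1 := by
    obtain ⟨_, hdecide⟩ := hforall
    exact ⟨_, hdecide.to_comp⟩
  refine hcomp.to_re.of_eq fun a => ?_
  simp [belowNeg, negS]

theorem antitone_belowNeg_segment (I : Informant) : Antitone fun n => belowNeg (segment I n) := by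
  intro s t hst x hx y hy
  obtain ⟨k, hk, hIk⟩ := mem_negS_segment.1 hy
  exact hx y (mem_negS_segment.2 ⟨k, hk.trans_le hst, hIk⟩)

namespace IsInformant

variable {I : Informant} {L : Set ℕ}

theorem subset_belowNeg_segment (hI : IsInformant I L) (hL : IsLowerSet L) (n : ℕ) :
    L ⊆ belowNeg (segment I n) := by
  intro x hx y hy
  obtain ⟨k, _, hIk⟩ := mem_negS_segment.1 hy
  have hyL : y ∈ Lᶜ := hI.2 ▸ ⟨k, hIk⟩
  exact lt_of_not_ge fun hyx => hyL (hL hyx hx)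

theorem eventually_belowNeg_segment_subset (hI : IsInformant I L) :
    ∀ᶠ n in atTop, belowNeg (segment I n) ⊆ L := by
  obtain rfl | hL := eq_or_ne L Set.univ
  · exact .of_forall fun n => Set.subset_univ _
  have hex : ∃ y, y ∉ L := (Set.ne_univ_iff_exists_notMem L).1 hL
  obtain ⟨k, hIk⟩ : Nat.find hex ∈ negI I := hI.2 ▸ Nat.find_spec hex
  filter_upwards [eventually_gt_atTop k] with n hn x hx
  exact not_not.1 (Nat.find_min hex (hx _ (mem_negS_segment.2 ⟨k, hn, hIk⟩)))

theorem eventually_belowNeg_segment_eq (hI : IsInformant I L) (hL : IsLowerSet L) :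
    ∀ᶠ n in atTop, belowNeg (segment I n) = L :=
  hI.eventually_belowNeg_segment_subset.mono fun n hn =>
    hn.antisymm (hI.subset_belowNeg_segment hL n)

end IsInformant

theorem mem_learnable_smond_bc_of_isLowerSet {𝓛 : Set (Set ℕ)} (h𝓛 : ∀ L ∈ 𝓛, IsLowerSet L) :
    𝓛 ∈ Learnable TT AllL AllI Gop (fun p I => SMond p I ∧ Bc p I) :=
  mem_learnable_smond_bc rePred_mem_belowNeg (fun _ _ I _ => antitone_belowNeg_segment I)
    fun L hL _ hI => hI.eventually_belowNeg_segment_eq (h𝓛 L hL)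

/-- The class `{ℕ} ∪ {{0,…,n} | n ∈ ℕ}` witnesses
`[Inf G SMon^d Bc] \ [Inf G SMon Bc] ≠ ∅`. -/
theorem dual_smon_minus_smon :
    insert Set.univ {L : Set ℕ | ∃ n : ℕ, L = {i | i ≤ n}} ∈
      Learnable TT AllL AllI Gop (fun p I => SMond p I ∧ Bc p I) \
        Learnable TT AllL AllI Gop (fun p I => SMon p I ∧ Bc p I) := by
  constructor
  · apply mem_learnable_smond_bc_of_isLowerSet
    rintro L (rfl | ⟨n, rfl⟩)
    · exact isLowerSet_univ
    · exact isLowerSet_Iic n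
  · refine notMem_learnable_smon_bc (fun _ _ => trivial) (Set.mem_insert _ _) fun n =>
      ⟨{i | i ≤ n}, .inr ⟨n, rfl⟩, fun x hx => by simp [hx.le], fun hsub => ?_⟩
    exact n.lt_succ_self.not_ge (hsub (Set.mem_univ (n + 1)))

end InfBc
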